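/- Let α > 1, and let a, b, c be real numbers with a > 0 and ab − c² > 0. Then the Lebesgue integral over D = {(x,y,z) ∈ ℝ³ : x > 0, y > 0, xy − z² > 0} satisfies ∫_D (xy − z²)^{(α−3)/2} exp(−(a x + b y + 2 c z)) d(x,y,z) = √π · Γ(α/2) · Γ((α−1)/2) · (ab − c²)^{−α/2}. (This evaluates the normalizing constant of the bivariate Wishart density: the two-dimensional multivariate gamma function Γ₂(α/2) = √π Γ(α/2) Γ((α−1)/2) appears.) -/

import Mathlib

open MeasureTheory Real

/-!
Put `S = [[a, c], [c, b]]` and `X = [[x, z], [z, y]]`, so that the integrand is a power of `det X`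
times `exp (-tr (S X))`. For fixed `x > 0` and `z`, the coordinate `t = y - z² / x` (the Schur
complement of `x` in `X`) ranges over `t > 0` and satisfies `det X = x t`. In the coordinates
`(x, z, t)` the integrand splits: the `t`-integral is a Gamma integral of rate `b`, the
`z`-integral is Gaussian, and what remains is a Gamma integral in `x` whose rate `a - c² / b` is the
Schur complement of `b` in `S`.
-/

open Set
open scoped ENNReal

lemma lintegral_rpow_mul_exp_neg_mul_Ioi {s r : ℝ} (hs : 0 < s) (hr : 0 < r) :
    ∫⁻ t in Ioi 0, ENNReal.ofReal (t ^ (s - 1) * exp (-(r * t))) =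
      ENNReal.ofReal ((1 / r) ^ s * Gamma s) := by
  have hGamma := integral_rpow_mul_exp_neg_mul_Ioi hs hr
  have hpos : 0 < (1 / r) ^ s * Gamma s := mul_pos (by positivity) (Gamma_pos_of_pos hs)
  rw [← hGamma, ofReal_integral_eq_lintegral_ofReal
    (.of_integral_ne_zero (hGamma.trans_ne hpos.ne'))]
  filter_upwards [ae_restrict_mem measurableSet_Ioi] with t ht
  have : 0 < t := ht
  positivity

lemma integral_exp_neg_mul_sq_add_mul {r : ℝ} (hr : r ≠ 0) (c : ℝ) :
    ∫ z : ℝ, exp (-(r * z ^ 2 + c * z)) = exp (c ^ 2 / (4 * r)) * √(π / r) := by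
  have complete_square (z : ℝ) : exp (-(r * z ^ 2 + c * z)) =
      exp (c ^ 2 / (4 * r)) * exp (-r * (z + c / (2 * r)) ^ 2) := by
    rw [← exp_add]
    congr 1
    field
  simp_rw [complete_square, integral_const_mul,
    integral_add_right_eq_self fun z : ℝ ↦ exp (-r * z ^ 2), integral_gaussian]

lemma lintegral_exp_neg_mul_sq_add_mul {r : ℝ} (hr : 0 < r) (c : ℝ) :
    ∫⁻ z : ℝ, ENNReal.ofReal (exp (-(r * z ^ 2 + c * z))) =
      ENNReal.ofReal (exp (c ^ 2 / (4 * r)) * √(π / r)) := by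
  have hgauss := integral_exp_neg_mul_sq_add_mul hr.ne' c
  rw [← hgauss, ofReal_integral_eq_lintegral_ofReal
    (.of_integral_ne_zero (hgauss.trans_ne (by positivity))) (ae_of_all _ fun _ ↦ by positivity)]

lemma lintegral_Ioi_comp_add_right (f : ℝ → ℝ≥0∞) (s : ℝ) :
    ∫⁻ t in Ioi 0, f (t + s) = ∫⁻ y in Ioi s, f y := by
  simpa using (measurePreserving_add_right volume s).setLIntegral_comp_preimage_emb
    (measurableEmbedding_addRight s) f (Ioi s)

/-- The cone of positive definite matrices `[[x, z], [z, y]]`, in the coordinates `(x, y, z)`: the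
off-diagonal entry comes last. -/
def posDefCone : Set (ℝ × ℝ × ℝ) :=
  {q | 0 < q.1 ∧ 0 < q.2.1 ∧ 0 < q.1 * q.2.1 - q.2.2 ^ 2}

lemma mem_posDefCone_iff {x y z : ℝ} : (x, y, z) ∈ posDefCone ↔ 0 < x ∧ z ^ 2 / x < y := by
  refine and_congr_right fun hx ↦ ?_
  rw [div_lt_iff₀' hx, sub_pos]
  exact ⟨And.right, fun h ↦ ⟨pos_of_mul_pos_right ((sq_nonneg z).trans_lt h) hx.le, h⟩⟩

lemma measurableSet_posDefCone : MeasurableSet posDefCone := by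
  unfold posDefCone
  measurability

lemma setLIntegral_posDefCone {f : ℝ × ℝ × ℝ → ℝ≥0∞} (hf : Measurable f) :
    ∫⁻ q in posDefCone, f q =
      ∫⁻ x in Ioi 0, ∫⁻ z, ∫⁻ t in Ioi 0, f (x, t + z ^ 2 / x, z) := by
  have hfD : Measurable (posDefCone.indicator f) := hf.indicator measurableSet_posDefCone
  rw [← lintegral_indicator measurableSet_posDefCone, Measure.volume_eq_prod,
    lintegral_prod _ hfD.aemeasurable, ← lintegral_indicator measurableSet_Ioi]
  refine lintegral_congr fun x ↦ ?_
  have hslice : Measurable fun w ↦ posDefCone.indicator f (x, w) := hfD.comp measurable_prodMk_left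
  rw [Measure.volume_eq_prod, lintegral_prod_symm' _ hslice]
  by_cases hx : 0 < x
  · rw [indicator_of_mem (mem_Ioi.2 hx)]
    refine lintegral_congr fun z ↦ ?_
    rw [lintegral_Ioi_comp_add_right fun y ↦ f (x, y, z), ← lintegral_indicator measurableSet_Ioi]
    simp only [indicator, mem_posDefCone_iff, hx, true_and, mem_Ioi]
  · simp [indicator, mem_posDefCone_iff, hx]

/-- The unnormalized density `det X ^ (p - 3 / 2) * exp (-tr (S X))` of the bivariate Wishart
distribution, where `S = [[a, c], [c, b]]` and `X = [[x, z], [z, y]]` has coordinates `(x, y, z)`.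
In terms of the number `α` of degrees of freedom, `p = α / 2`. -/
noncomputable def wishartKernel (p a b c : ℝ) (q : ℝ × ℝ × ℝ) : ℝ :=
  (q.1 * q.2.1 - q.2.2 ^ 2) ^ (p - 3 / 2) * exp (-(a * q.1 + b * q.2.1 + 2 * c * q.2.2))

/-- The multivariate gamma function `Γ₂`. -/
noncomputable def bivariateGamma (p : ℝ) : ℝ :=
  √π * Gamma p * Gamma (p - 1 / 2)

lemma bivariateGamma_pos {p : ℝ} (hp : 1 / 2 < p) : 0 < bivariateGamma p := by
  have := Gamma_pos_of_pos (show 0 < p by linarith)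
  have := Gamma_pos_of_pos (sub_pos.2 hp)
  unfold bivariateGamma
  positivity

section WishartKernel

variable {p a b c x : ℝ}

lemma measurable_wishartKernel : Measurable (wishartKernel p a b c) := by
  unfold wishartKernel
  fun_prop

lemma wishartKernel_nonneg {q : ℝ × ℝ × ℝ} (hq : q ∈ posDefCone) :
    0 ≤ wishartKernel p a b c q :=
  mul_nonneg (rpow_nonneg hq.2.2.le _) (exp_nonneg _)

lemma wishartKernel_schur {t : ℝ} (hx : 0 < x) (ht : 0 < t) (z : ℝ) :
    wishartKernel p a b c (x, t + z ^ 2 / x, z) =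
      x ^ (p - 3 / 2) * exp (-(a * x)) * exp (-(b / x * z ^ 2 + 2 * c * z)) *
        (t ^ (p - 1 / 2 - 1) * exp (-(b * t))) := by
  have hdet : x * (t + z ^ 2 / x) - z ^ 2 = x * t := by field
  have hexp : exp (-(a * x + b * (t + z ^ 2 / x) + 2 * c * z)) =
      exp (-(a * x)) * exp (-(b / x * z ^ 2 + 2 * c * z)) * exp (-(b * t)) := by
    rw [← exp_add, ← exp_add]
    ring_nf
  rw [wishartKernel, hdet, hexp, mul_rpow hx.le ht.le,
    show p - 1 / 2 - 1 = p - 3 / 2 by ring]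
  ring

lemma wishart_slice_integral_eq (hb : 0 < b) (hx : 0 < x) :
    x ^ (p - 3 / 2) * exp (-(a * x)) * (exp ((2 * c) ^ 2 / (4 * (b / x))) * √(π / (b / x))) *
        ((1 / b) ^ (p - 1 / 2) * Gamma (p - 1 / 2)) =
      √π * Gamma (p - 1 / 2) * (1 / b) ^ p *
        (x ^ (p - 1) * exp (-((a - c ^ 2 / b) * x))) := by
  have hsqrt : √(π / (b / x)) = √π * (1 / b) ^ (1 / 2 : ℝ) * x ^ (1 / 2 : ℝ) := by
    rw [← sqrt_eq_rpow, ← sqrt_eq_rpow, ← sqrt_mul (by positivity), ← sqrt_mul (by positivity)]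
    congr 1
    field
  have hpow_b : (1 / b) ^ p = (1 / b) ^ (p - 1 / 2) * (1 / b) ^ (1 / 2 : ℝ) := by
    rw [← rpow_add (by positivity), sub_add_cancel]
  have hpow_x : x ^ (p - 1) = x ^ (p - 3 / 2) * x ^ (1 / 2 : ℝ) := by
    rw [← rpow_add hx]
    ring_nf
  have hexp : exp (-((a - c ^ 2 / b) * x)) =
      exp (-(a * x)) * exp ((2 * c) ^ 2 / (4 * (b / x))) := by
    rw [← exp_add]
    congr 1
    field
  rw [hsqrt, hpow_b, hpow_x, hexp]
  ring

lemma lintegral_wishartKernel_schur (hp : 1 / 2 < p) (hb : 0 < b) (hx : 0 < x) :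
    ∫⁻ z, ∫⁻ t in Ioi 0, ENNReal.ofReal (wishartKernel p a b c (x, t + z ^ 2 / x, z)) =
      ENNReal.ofReal (√π * Gamma (p - 1 / 2) * (1 / b) ^ p) *
        ENNReal.ofReal (x ^ (p - 1) * exp (-((a - c ^ 2 / b) * x))) := by
  set A := x ^ (p - 3 / 2) * exp (-(a * x))
  have hA : 0 ≤ A := by positivity
  have : 0 ≤ Gamma (p - 1 / 2) := Gamma_nonneg_of_nonneg (sub_pos.2 hp).le
  calc ∫⁻ z, ∫⁻ t in Ioi 0, ENNReal.ofReal (wishartKernel p a b c (x, t + z ^ 2 / x, z))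
      = ∫⁻ z, ∫⁻ t in Ioi 0, ENNReal.ofReal A *
          ENNReal.ofReal (exp (-(b / x * z ^ 2 + 2 * c * z))) *
          ENNReal.ofReal (t ^ (p - 1 / 2 - 1) * exp (-(b * t))) := by
        refine lintegral_congr fun z ↦ setLIntegral_congr_fun measurableSet_Ioi fun t ht ↦ ?_
        rw [wishartKernel_schur hx ht, ENNReal.ofReal_mul (by positivity), ENNReal.ofReal_mul hA]
    _ = ENNReal.ofReal A * (∫⁻ z, ENNReal.ofReal (exp (-(b / x * z ^ 2 + 2 * c * z)))) *
          ∫⁻ t in Ioi 0, ENNReal.ofReal (t ^ (p - 1 / 2 - 1) * exp (-(b * t))) := by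
        simp_rw [lintegral_const_mul _ (show Measurable fun t : ℝ ↦
          ENNReal.ofReal (t ^ (p - 1 / 2 - 1) * exp (-(b * t))) by fun_prop)]
        rw [lintegral_mul_const _ (by fun_prop), lintegral_const_mul _ (by fun_prop)]
    _ = ENNReal.ofReal (√π * Gamma (p - 1 / 2) * (1 / b) ^ p) *
          ENNReal.ofReal (x ^ (p - 1) * exp (-((a - c ^ 2 / b) * x))) := by
        rw [lintegral_exp_neg_mul_sq_add_mul (by positivity),
          lintegral_rpow_mul_exp_neg_mul_Ioi (sub_pos.2 hp) hb, ← ENNReal.ofReal_mul hA,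
          ← ENNReal.ofReal_mul (by positivity), ← ENNReal.ofReal_mul (by positivity),
          wishart_slice_integral_eq hb hx]

lemma setLIntegral_posDefCone_wishartKernel (hp : 1 / 2 < p) (hb : 0 < b)
    (hdet : 0 < a * b - c ^ 2) :
    ∫⁻ q in posDefCone, ENNReal.ofReal (wishartKernel p a b c q) =
      ENNReal.ofReal (bivariateGamma p * (a * b - c ^ 2) ^ (-p)) := by
  have hschur : a - c ^ 2 / b = (a * b - c ^ 2) / b := by field
  have hrate : 0 < a - c ^ 2 / b := hschur ▸ div_pos hdet hb
  have : 0 ≤ Gamma (p - 1 / 2) := Gamma_nonneg_of_nonneg (sub_pos.2 hp).le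
  have hpow : (1 / b) ^ p * (1 / (a - c ^ 2 / b)) ^ p = (a * b - c ^ 2) ^ (-p) := by
    rw [← mul_rpow (by positivity) (by positivity), rpow_neg hdet.le, ← inv_rpow hdet.le, hschur]
    congr 1
    field
  calc ∫⁻ q in posDefCone, ENNReal.ofReal (wishartKernel p a b c q)
      = ∫⁻ x in Ioi 0, ∫⁻ z, ∫⁻ t in Ioi 0,
          ENNReal.ofReal (wishartKernel p a b c (x, t + z ^ 2 / x, z)) :=
        setLIntegral_posDefCone measurable_wishartKernel.ennreal_ofReal
    _ = ∫⁻ x in Ioi 0, ENNReal.ofReal (√π * Gamma (p - 1 / 2) * (1 / b) ^ p) *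
          ENNReal.ofReal (x ^ (p - 1) * exp (-((a - c ^ 2 / b) * x))) :=
        setLIntegral_congr_fun measurableSet_Ioi fun _ hx ↦ lintegral_wishartKernel_schur hp hb hx
    _ = ENNReal.ofReal (√π * Gamma (p - 1 / 2) * (1 / b) ^ p *
          ((1 / (a - c ^ 2 / b)) ^ p * Gamma p)) := by
        rw [lintegral_const_mul _ (by fun_prop),
          lintegral_rpow_mul_exp_neg_mul_Ioi (by linarith) hrate,
          ← ENNReal.ofReal_mul (by positivity)]
    _ = ENNReal.ofReal (bivariateGamma p * (a * b - c ^ 2) ^ (-p)) := by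
        rw [← hpow, bivariateGamma]
        ring_nf

end WishartKernel

/-- Normalizing constant of the bivariate Wishart density, as a Lebesgue integral over
`D = {(x,y,z) : x > 0, y > 0, xy − z² > 0}`:
`∫_D (xy−z²)^{(α−3)/2} e^{−(ax+by+2cz)} = √π Γ(α/2) Γ((α−1)/2) (ab−c²)^{−α/2}`. -/
theorem wishart_normalizing_constant_2x2 (α a b c : ℝ)
    (hα : 1 < α) (ha : 0 < a) (hdet : 0 < a * b - c ^ 2) :
    (∫ p in {q : ℝ × ℝ × ℝ | 0 < q.1 ∧ 0 < q.2.1 ∧ 0 < q.1 * q.2.1 - q.2.2 ^ 2},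
        (p.1 * p.2.1 - p.2.2 ^ 2) ^ ((α - 3) / 2) *
          Real.exp (-(a * p.1 + b * p.2.1 + 2 * c * p.2.2))) =
      Real.sqrt π * Real.Gamma (α / 2) * Real.Gamma ((α - 1) / 2) *
        (a * b - c ^ 2) ^ (-α / 2) := by
  have hp : 1 / 2 < α / 2 := by linarith
  have hb : 0 < b := pos_of_mul_pos_right (by linarith [sq_nonneg c]) ha.le
  rw [sub_div, sub_div, neg_div]
  change ∫ q in posDefCone, wishartKernel (α / 2) a b c q =
    bivariateGamma (α / 2) * (a * b - c ^ 2) ^ (-(α / 2))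
  rw [integral_eq_lintegral_of_nonneg_ae
      ((ae_restrict_mem measurableSet_posDefCone).mono fun _ ↦ wishartKernel_nonneg)
      measurable_wishartKernel.aestronglyMeasurable,
    setLIntegral_posDefCone_wishartKernel hp hb hdet, ENNReal.toReal_ofReal]
  exact mul_nonneg (bivariateGamma_pos hp).le (rpow_nonneg hdet.le _)
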